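/- arXiv:2008.07161 — 2 statements merged into one kernel-verified Lean document; each statement's English description precedes it below -/
import Mathlib

section
/- Let U ⊆ ℂ be a conjugate symmetric set and let F : U → 𝔎ₙ be any function. Then F_σ(κ) lies in the range of the embedding a ↦ 1 ⊗ₜ a of 𝔠ₙ into 𝔎ₙ for every κ ∈ U_σ if and only if F is a stem function, i.e. F(conj ζ) = χ(F(ζ)) for all ζ ∈ U. -/
open scoped TensorProduct

/-- The paravector `κ = x + ι v` in the Clifford algebra. -/
noncomputable def paravec {n : ℕ} (Q : QuadraticForm ℝ (EuclideanSpace ℝ (Fin n)))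
    (x : ℝ) (v : EuclideanSpace ℝ (Fin n)) : CliffordAlgebra Q :=
  algebraMap ℝ (CliffordAlgebra Q) x + CliffordAlgebra.ι Q v

/-- The eigenvalue `s₊(κ) = x + i‖v‖`. -/
noncomputable def sPlus {n : ℕ} (x : ℝ) (v : EuclideanSpace ℝ (Fin n)) : ℂ :=
  (x : ℂ) + ‖v‖ * Complex.I

/-- The eigenvalue `s₋(κ) = x - i‖v‖`. -/
noncomputable def sMinus {n : ℕ} (x : ℝ) (v : EuclideanSpace ℝ (Fin n)) : ℂ :=
  (x : ℂ) - ‖v‖ * Complex.I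

/-- The idempotent `ι₊(κ) = (1/2) • (1 - i • (1 ⊗ 𝔰_κ))` in the complexification. -/
noncomputable def iotaP {n : ℕ} (Q : QuadraticForm ℝ (EuclideanSpace ℝ (Fin n)))
    (v : EuclideanSpace ℝ (Fin n)) : ℂ ⊗[ℝ] CliffordAlgebra Q :=
  (1/2 : ℝ) • (1 - Complex.I • ((1 : ℂ) ⊗ₜ[ℝ] CliffordAlgebra.ι Q (‖v‖⁻¹ • v)))

/-- The idempotent `ι₋(κ) = (1/2) • (1 + i • (1 ⊗ 𝔰_κ))` in the complexification. -/
noncomputable def iotaM {n : ℕ} (Q : QuadraticForm ℝ (EuclideanSpace ℝ (Fin n)))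
    (v : EuclideanSpace ℝ (Fin n)) : ℂ ⊗[ℝ] CliffordAlgebra Q :=
  (1/2 : ℝ) • (1 + Complex.I • ((1 : ℂ) ⊗ₜ[ℝ] CliffordAlgebra.ι Q (‖v‖⁻¹ • v)))

/-- The conjugation `χ` of the complexification `𝔎ₙ = ℂ ⊗[ℝ] 𝔠ₙ`, determined by
`χ(λ ⊗ a) = (conj λ) ⊗ a`. -/
noncomputable def chi {n : ℕ} (Q : QuadraticForm ℝ (EuclideanSpace ℝ (Fin n))) :
    (ℂ ⊗[ℝ] CliffordAlgebra Q) →ₐ[ℝ] ℂ ⊗[ℝ] CliffordAlgebra Q :=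
  Algebra.TensorProduct.map Complex.conjAe.toAlgHom (AlgHom.id ℝ (CliffordAlgebra Q))

open Classical in
/-- The function `F_σ` induced on paravectors `(x, v)` by a `𝔎ₙ`-valued function `F`. -/
noncomputable def Fsig {n : ℕ} (Q : QuadraticForm ℝ (EuclideanSpace ℝ (Fin n)))
    (F : ℂ → ℂ ⊗[ℝ] CliffordAlgebra Q) (x : ℝ) (v : EuclideanSpace ℝ (Fin n)) :
    ℂ ⊗[ℝ] CliffordAlgebra Q :=
  if v = 0 then F x
  else F (sPlus x v) * iotaP Q v + F (sMinus x v) * iotaM Q v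

open Classical in
/-- The function `f_σ` induced on paravectors `(x, v)` by a complex-valued function `f`. -/
noncomputable def fsig {n : ℕ} (Q : QuadraticForm ℝ (EuclideanSpace ℝ (Fin n)))
    (f : ℂ → ℂ) (x : ℝ) (v : EuclideanSpace ℝ (Fin n)) :
    ℂ ⊗[ℝ] CliffordAlgebra Q :=
  if v = 0 then f x • 1
  else f (sPlus x v) • iotaP Q v + f (sMinus x v) • iotaM Q v

theorem chi_tmul' {n : ℕ} (Q : QuadraticForm ℝ (EuclideanSpace ℝ (Fin n)))
    (c : ℂ) (a : CliffordAlgebra Q) :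
    chi Q (c ⊗ₜ[ℝ] a) = ((starRingEnd ℂ) c) ⊗ₜ[ℝ] a := by
  simp [chi]

theorem decomp {n : ℕ} (Q : QuadraticForm ℝ (EuclideanSpace ℝ (Fin n)))
    (z : ℂ ⊗[ℝ] CliffordAlgebra Q) :
    ∃ a b : CliffordAlgebra Q, z = (1 : ℂ) ⊗ₜ[ℝ] a + Complex.I ⊗ₜ[ℝ] b := by
  induction z with
  | zero => exact ⟨0, 0, by simp⟩
  | tmul c a =>
    refine ⟨c.re • a, c.im • a, ?_⟩
    rw [← TensorProduct.smul_tmul, ← TensorProduct.smul_tmul, ← TensorProduct.add_tmul]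
    congr 1
    apply Complex.ext <;> simp
  | add x y hx hy =>
    obtain ⟨a, b, rfl⟩ := hx
    obtain ⟨c, d, rfl⟩ := hy
    refine ⟨a + c, b + d, ?_⟩
    rw [TensorProduct.tmul_add, TensorProduct.tmul_add]
    abel

theorem mem_range_iff {n : ℕ} (Q : QuadraticForm ℝ (EuclideanSpace ℝ (Fin n)))
    (z : ℂ ⊗[ℝ] CliffordAlgebra Q) :
    z ∈ Set.range (fun a : CliffordAlgebra Q => (1 : ℂ) ⊗ₜ[ℝ] a) ↔ chi Q z = z := by
  constructor
  · rintro ⟨a, rfl⟩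
    simp [chi_tmul']
  · intro h
    obtain ⟨a, b, rfl⟩ := decomp Q z
    rw [map_add, chi_tmul', chi_tmul', map_one, Complex.conj_I, TensorProduct.neg_tmul] at h
    have h1 := add_left_cancel h
    have h2 : (2 : ℝ) • (Complex.I ⊗ₜ[ℝ] b) = 0 := by
      rw [two_smul]
      nth_rewrite 1 [← h1]
      exact neg_add_cancel _
    have h3 : Complex.I ⊗ₜ[ℝ] b = 0 := by
      rcases smul_eq_zero.mp h2 with h | h
      · norm_num at h
      · exact h
    exact ⟨a, by simp [h3]⟩

theorem iotaP_eq {n : ℕ} (Q : QuadraticForm ℝ (EuclideanSpace ℝ (Fin n)))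
    (v : EuclideanSpace ℝ (Fin n)) :
    iotaP Q v = (1/2 : ℝ) • (1 - Complex.I ⊗ₜ[ℝ] CliffordAlgebra.ι Q (‖v‖⁻¹ • v)) := by
  simp only [iotaP, TensorProduct.smul_tmul', smul_eq_mul, mul_one]

theorem iotaM_eq {n : ℕ} (Q : QuadraticForm ℝ (EuclideanSpace ℝ (Fin n)))
    (v : EuclideanSpace ℝ (Fin n)) :
    iotaM Q v = (1/2 : ℝ) • (1 + Complex.I ⊗ₜ[ℝ] CliffordAlgebra.ι Q (‖v‖⁻¹ • v)) := by
  simp only [iotaM, TensorProduct.smul_tmul', smul_eq_mul, mul_one]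

theorem chi_iotaP {n : ℕ} (Q : QuadraticForm ℝ (EuclideanSpace ℝ (Fin n)))
    (v : EuclideanSpace ℝ (Fin n)) : chi Q (iotaP Q v) = iotaM Q v := by
  rw [iotaP_eq, iotaM_eq, map_smul, map_sub, map_one, chi_tmul', Complex.conj_I,
    TensorProduct.neg_tmul, sub_neg_eq_add]

theorem chi_iotaM {n : ℕ} (Q : QuadraticForm ℝ (EuclideanSpace ℝ (Fin n)))
    (v : EuclideanSpace ℝ (Fin n)) : chi Q (iotaM Q v) = iotaP Q v := by
  rw [iotaP_eq, iotaM_eq, map_smul, map_add, map_one, chi_tmul', Complex.conj_I,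
    TensorProduct.neg_tmul, sub_eq_add_neg]

theorem iotaP_neg {n : ℕ} (Q : QuadraticForm ℝ (EuclideanSpace ℝ (Fin n)))
    (v : EuclideanSpace ℝ (Fin n)) : iotaP Q (-v) = iotaM Q v := by
  rw [iotaP_eq, iotaM_eq, norm_neg, smul_neg, map_neg, TensorProduct.tmul_neg, sub_neg_eq_add]

theorem iotaM_neg {n : ℕ} (Q : QuadraticForm ℝ (EuclideanSpace ℝ (Fin n)))
    (v : EuclideanSpace ℝ (Fin n)) : iotaM Q (-v) = iotaP Q v := by
  rw [iotaP_eq, iotaM_eq, norm_neg, smul_neg, map_neg, TensorProduct.tmul_neg, sub_eq_add_neg]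

theorem alg_key {R : Type*} [Ring R] [Algebra ℝ R] (A B J : R) (hJ : J * J = 1)
    (h1 : A * ((1/2 : ℝ) • (1 + J)) + B * ((1/2 : ℝ) • (1 - J)) = 0)
    (h2 : A * ((1/2 : ℝ) • (1 - J)) + B * ((1/2 : ℝ) • (1 + J)) = 0) : A = 0 ∧ B = 0 := by
  have hs : A + B = 0 := by
    have : A + B = (A * ((1/2 : ℝ) • (1 + J)) + B * ((1/2 : ℝ) • (1 - J))) +
      (A * ((1/2 : ℝ) • (1 - J)) + B * ((1/2 : ℝ) • (1 + J))) := by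
      simp only [mul_smul_comm, mul_add, mul_sub, mul_one]
      module
    rw [this, h1, h2, add_zero]
  have hB : B = -A := (neg_eq_of_add_eq_zero_right hs).symm
  have hA : A * J = 0 := by
    rw [hB] at h1
    rw [← h1]
    simp only [mul_smul_comm, mul_add, mul_sub, mul_one, neg_mul]
    module
  have hA0 : A = 0 := by
    calc A = A * J * J := by rw [mul_assoc, hJ, mul_one]
      _ = 0 := by rw [hA, zero_mul]
  exact ⟨hA0, by rw [hB, hA0, neg_zero]⟩

theorem J_sq {n : ℕ} (Q : QuadraticForm ℝ (EuclideanSpace ℝ (Fin n)))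
    (hQ : ∀ v : EuclideanSpace ℝ (Fin n), Q v = -‖v‖ ^ 2)
    (v : EuclideanSpace ℝ (Fin n)) (hv : v ≠ 0) :
    (Complex.I ⊗ₜ[ℝ] CliffordAlgebra.ι Q (‖v‖⁻¹ • v)) *
      (Complex.I ⊗ₜ[ℝ] CliffordAlgebra.ι Q (‖v‖⁻¹ • v)) = 1 := by
  have hnorm : ‖‖v‖⁻¹ • v‖ = 1 := norm_smul_inv_norm (𝕜 := ℝ) hv
  rw [Algebra.TensorProduct.tmul_mul_tmul, CliffordAlgebra.ι_sq_scalar, hQ, hnorm,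
    Complex.I_mul_I]
  simp [TensorProduct.neg_tmul, TensorProduct.tmul_neg, Algebra.TensorProduct.one_def]

theorem conj_sPlus {n : ℕ} (x : ℝ) (v : EuclideanSpace ℝ (Fin n)) :
    (starRingEnd ℂ) (sPlus x v) = sMinus x v := by
  simp [sPlus, sMinus, sub_eq_add_neg]

theorem conj_sMinus {n : ℕ} (x : ℝ) (v : EuclideanSpace ℝ (Fin n)) :
    (starRingEnd ℂ) (sMinus x v) = sPlus x v := by
  simp [sPlus, sMinus]

/-- `F_σ(κ)` lies in the image of `𝔠ₙ → 𝔎ₙ`, `a ↦ 1 ⊗ a`, for every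
`κ ∈ U_σ` if and only if `F` is a stem function on the conjugate symmetric set `U`. -/
theorem stmt7 {n : ℕ} (hn : 1 ≤ n)
    (Q : QuadraticForm ℝ (EuclideanSpace ℝ (Fin n)))
    (hQ : ∀ v : EuclideanSpace ℝ (Fin n), Q v = -‖v‖ ^ 2)
    (U : Set ℂ) (hU : ∀ ζ : ℂ, ζ ∈ U ↔ (starRingEnd ℂ) ζ ∈ U)
    (F : ℂ → ℂ ⊗[ℝ] CliffordAlgebra Q) :
    (∀ (x : ℝ) (v : EuclideanSpace ℝ (Fin n)), sPlus x v ∈ U → sMinus x v ∈ U →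
        Fsig Q F x v ∈ Set.range (fun a : CliffordAlgebra Q => (1 : ℂ) ⊗ₜ[ℝ] a)) ↔
      (∀ ζ ∈ U, F ((starRingEnd ℂ) ζ) = chi Q (F ζ)) := by
  constructor
  · intro H
    have key : ∀ (x : ℝ) (v : EuclideanSpace ℝ (Fin n)), sPlus x v ∈ U → sMinus x v ∈ U →
        F (sMinus x v) = chi Q (F (sPlus x v)) ∧ F (sPlus x v) = chi Q (F (sMinus x v)) := by
      intro x v hp hm
      by_cases hv : v = 0
      · have h := (mem_range_iff Q _).mp (H x v hp hm)
        subst hv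
        simp only [Fsig, if_true] at h
        simp [sPlus, sMinus, h]
      · have h1 := (mem_range_iff Q _).mp (H x v hp hm)
        have h2 := (mem_range_iff Q _).mp (H x (-v) (by simpa [sPlus] using hp)
          (by simpa [sMinus] using hm))
        have e1 : sPlus x (-v) = sPlus x v := by simp [sPlus]
        have e2 : sMinus x (-v) = sMinus x v := by simp [sMinus]
        simp only [Fsig, hv, neg_eq_zero, if_false, map_add, map_mul, chi_iotaP, chi_iotaM,
          iotaP_neg, iotaM_neg, e1, e2] at h1 h2
        rw [iotaP_eq, iotaM_eq] at h1 h2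
        have := alg_key (chi Q (F (sPlus x v)) - F (sMinus x v))
          (chi Q (F (sMinus x v)) - F (sPlus x v)) _ (J_sq Q hQ v hv)
          (by rw [sub_mul, sub_mul, ← sub_eq_zero.mpr h1]; abel)
          (by rw [sub_mul, sub_mul, ← sub_eq_zero.mpr h2]; abel)
        exact ⟨(sub_eq_zero.mp this.1).symm, (sub_eq_zero.mp this.2).symm⟩
    intro ζ hζ
    have hζ' := (hU ζ).mp hζ
    let v : EuclideanSpace ℝ (Fin n) := EuclideanSpace.single ⟨0, hn⟩ ζ.im
    have hv : ‖v‖ = |ζ.im| := by simp [v]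
    rcases le_total 0 ζ.im with h | h
    · have e : sPlus ζ.re v = ζ := by
        apply Complex.ext <;> simp [sPlus, hv, abs_of_nonneg h]
      have e' : sMinus ζ.re v = (starRingEnd ℂ) ζ := by rw [← conj_sPlus, e]
      have := key ζ.re v (by rwa [e]) (by rwa [e'])
      rw [e, e'] at this
      exact this.1
    · have e : sMinus ζ.re v = ζ := by
        apply Complex.ext <;> simp [sMinus, hv, abs_of_nonpos h]
      have e' : sPlus ζ.re v = (starRingEnd ℂ) ζ := by rw [← conj_sMinus, e]
      have := key ζ.re v (by rwa [e']) (by rwa [e])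
      rw [e, e'] at this
      exact this.2
  · intro H x v hp hm
    rw [mem_range_iff]
    by_cases hv : v = 0
    · subst hv
      have := H x (by simpa [sPlus] using hp)
      rw [Complex.conj_ofReal] at this
      simp [Fsig, ← this]
    · have h1 := H _ hp
      have h2 := H _ hm
      rw [conj_sPlus] at h1
      rw [conj_sMinus] at h2
      simp only [Fsig, hv, if_false, map_add, map_mul, chi_iotaP, chi_iotaM]
      rw [← h1, ← h2, add_comm]
end

section
/- Let A be a unital associative real algebra (a Ring A with Algebra ℝ A), T ∈ A and λ ∈ ℂ. Then the element λ ⊗ₜ 1 − 1 ⊗ₜ T is a unit of the complexification ℂ ⊗[ℝ] A if and only if T² − (2 · λ.re) • T + (Complex.normSq λ) • 1 is a unit of A. (In the paper's terminology: the complex resolvent sets defined via the complexified operator and via the real quadratic T² − 2Re(λ)T + |λ|² coincide.) -/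
open scoped TensorProduct

/-- The real-part projection of the complexification. -/
noncomputable def rePart (A : Type*) [Ring A] [Algebra ℝ A] : ℂ ⊗[ℝ] A →ₗ[ℝ] A :=
  (TensorProduct.lid ℝ A).toLinearMap ∘ₗ TensorProduct.map Complex.reLm LinearMap.id

theorem rePart_tmul (A : Type*) [Ring A] [Algebra ℝ A] (z : ℂ) (a : A) :
    rePart A (z ⊗ₜ[ℝ] a) = z.re • a := by
  simp [rePart]

theorem rePart_left (A : Type*) [Ring A] [Algebra ℝ A] (q : A) (x : ℂ ⊗[ℝ] A) :
    rePart A (((1 : ℂ) ⊗ₜ[ℝ] q) * x) = q * rePart A x := by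
  induction x using TensorProduct.induction_on with
  | zero => simp
  | tmul z a => simp [rePart_tmul]
  | add x y hx hy => simp only [mul_add, map_add, hx, hy]

theorem rePart_right (A : Type*) [Ring A] [Algebra ℝ A] (q : A) (x : ℂ ⊗[ℝ] A) :
    rePart A (x * ((1 : ℂ) ⊗ₜ[ℝ] q)) = rePart A x * q := by
  induction x using TensorProduct.induction_on with
  | zero => simp
  | tmul z a => simp [rePart_tmul]
  | add x y hx hy => simp only [add_mul, map_add, hx, hy]

theorem isUnit_one_tmul_iff (A : Type*) [Ring A] [Algebra ℝ A] (q : A) :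
    IsUnit ((1 : ℂ) ⊗ₜ[ℝ] q) ↔ IsUnit q := by
  constructor
  · intro h
    obtain ⟨x, h1⟩ := h.exists_right_inv
    obtain ⟨y, h2⟩ := h.exists_left_inv
    have e : rePart A 1 = 1 := by
      rw [Algebra.TensorProduct.one_def, rePart_tmul]; simp
    have h1' := congrArg (rePart A) h1
    have h2' := congrArg (rePart A) h2
    rw [rePart_left, e] at h1'
    rw [rePart_right, e] at h2'
    exact isUnit_iff_exists_and_exists.2 ⟨⟨_, h1'⟩, ⟨_, h2'⟩⟩
  · intro h
    exact h.map (Algebra.TensorProduct.includeRight : A →ₐ[ℝ] ℂ ⊗[ℝ] A)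

theorem factor_mul (A : Type*) [Ring A] [Algebra ℝ A] (T : A) (z w : ℂ) (s p : ℝ)
    (hs : z + w = (s : ℂ)) (hp : z * w = (p : ℂ)) :
    (z ⊗ₜ[ℝ] (1 : A) - (1 : ℂ) ⊗ₜ[ℝ] T) * (w ⊗ₜ[ℝ] (1 : A) - (1 : ℂ) ⊗ₜ[ℝ] T) =
      (1 : ℂ) ⊗ₜ[ℝ] (T ^ 2 - s • T + p • (1 : A)) := by
  have h1 : (1 : ℂ) ⊗ₜ[ℝ] (s • T) = z ⊗ₜ[ℝ] T + w ⊗ₜ[ℝ] T := by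
    rw [← TensorProduct.add_tmul, hs, ← TensorProduct.smul_tmul]; simp
  have h2 : (1 : ℂ) ⊗ₜ[ℝ] (p • (1 : A)) = (z * w) ⊗ₜ[ℝ] (1 : A) := by
    rw [hp, ← TensorProduct.smul_tmul]; simp
  rw [TensorProduct.tmul_add, TensorProduct.tmul_sub, h1, h2]
  simp only [sub_mul, mul_sub, Algebra.TensorProduct.tmul_mul_tmul, one_mul, mul_one, pow_two]
  abel

/-- for a unital real algebra `A`, `T ∈ A` and `λ ∈ ℂ`, the element
`λ ⊗ 1 - 1 ⊗ T` is a unit of the complexification `ℂ ⊗[ℝ] A` if and only if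
`T² - 2Re(λ) T + |λ|² 1` is a unit of `A`. -/
theorem stmt16 (A : Type*) [Ring A] [Algebra ℝ A] (T : A) (lam : ℂ) :
    IsUnit (lam ⊗ₜ[ℝ] (1 : A) - (1 : ℂ) ⊗ₜ[ℝ] T) ↔
      IsUnit (T ^ 2 - (2 * lam.re) • T + (Complex.normSq lam) • (1 : A)) := by
  have hs : lam + (starRingEnd ℂ) lam = ((2 * lam.re : ℝ) : ℂ) := Complex.add_conj lam
  have hp : lam * (starRingEnd ℂ) lam = ((Complex.normSq lam : ℝ) : ℂ) := Complex.mul_conj lam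
  have e1 := factor_mul A T _ _ _ _ hs hp
  have e2 := factor_mul A T _ _ _ _ ((add_comm _ _).trans hs) ((mul_comm _ _).trans hp)
  have hc : Commute (lam ⊗ₜ[ℝ] (1 : A) - (1 : ℂ) ⊗ₜ[ℝ] T)
      ((starRingEnd ℂ) lam ⊗ₜ[ℝ] (1 : A) - (1 : ℂ) ⊗ₜ[ℝ] T) := e1.trans e2.symm
  rw [← isUnit_one_tmul_iff A, ← e1, hc.isUnit_mul_iff]
  refine ⟨fun h => ⟨h, ?_⟩, fun h => h.1⟩
  have := h.map (Algebra.TensorProduct.map (Complex.conjAe : ℂ →ₐ[ℝ] ℂ) (AlgHom.id ℝ A))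
  simpa using this
end
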